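/- Let f = x⁴ + y⁴ + z⁴ + x·y²·z² in ℂ[x,y,z], and let J₁ be the ideal of ℂ[[x,y,z]] generated by the images of the twelve polynomials x·f, y·f, z·f, f − x·∂f/∂x, x·∂f/∂y, x·∂f/∂z, y·∂f/∂x, f − y·∂f/∂y, y·∂f/∂z, z·∂f/∂x, z·∂f/∂y, f − z·∂f/∂z. Then the image of f in ℂ[[x,y,z]] does not belong to J₁. -/

import Mathlib

open MvPolynomial

/-- The canonical ring homomorphism `ℂ[x,y,z] → ℂ[[x,y,z]]`. -/
noncomputable def ι : MvPolynomial (Fin 3) ℂ →+* MvPowerSeries (Fin 3) ℂ :=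
  MvPolynomial.coeToMvPowerSeries.ringHom

/-- The polynomial `f = x⁴ + y⁴ + z⁴ + x·y²·z²` in `ℂ[x,y,z]`. -/
noncomputable def f : MvPolynomial (Fin 3) ℂ :=
  X 0 ^ 4 + X 1 ^ 4 + X 2 ^ 4 + X 0 * X 1 ^ 2 * X 2 ^ 2

/-- The ideal `J₁` of `ℂ[[x,y,z]]` generated by the images of
`x·f, y·f, z·f` and `δ_{ij}·f − xᵢ·(∂f/∂xⱼ)` for `i, j = 1, 2, 3`. -/
noncomputable def J₁ : Ideal (MvPowerSeries (Fin 3) ℂ) :=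
  Ideal.span
    { ι (X 0 * f), ι (X 1 * f), ι (X 2 * f),
      ι (f - X 0 * pderiv 0 f), ι (X 0 * pderiv 1 f), ι (X 0 * pderiv 2 f),
      ι (X 1 * pderiv 0 f), ι (f - X 1 * pderiv 1 f), ι (X 1 * pderiv 2 f),
      ι (X 2 * pderiv 0 f), ι (X 2 * pderiv 1 f), ι (f - X 2 * pderiv 2 f) }

/-!
For `F = ∑ i, xᵢ ^ d + x ^ m` in `n` variables, the relations `F ≡ xᵢ ∂F/∂xᵢ = d xᵢ ^ d + mᵢ x ^ m`
modulo the ideal only say, after eliminating the `xᵢ ^ d`, that `(n - d) F ≡ (|m| - d) x ^ m`.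
Hence some linear functional supported on the monomials `xᵢ ^ d` and `x ^ m` respects them without
killing `F`. It vanishes on all other multiples of the generators, which miss its support because
`mᵢ < d - 1` and `|m| > d`.
-/

open Finsupp

section EulerDefect

variable {σ R : Type*} [DecidableEq σ] [CommRing R]

/-- The ideal generated by the `xᵢ p` and the `δᵢⱼ p - xᵢ ∂p/∂xⱼ`. For `p = f` its extension to the
power series ring is `J₁`. -/
noncomputable def eulerDefectIdeal (p : MvPolynomial σ R) : Ideal (MvPolynomial σ R) :=
  Ideal.span (Set.range (fun i => X i * p) ∪
    Set.range fun ij : σ × σ => (if ij.1 = ij.2 then p else 0) - X ij.1 * pderiv ij.2 p)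

lemma X_mul_self_mem_eulerDefectIdeal (p : MvPolynomial σ R) (i : σ) :
    X i * p ∈ eulerDefectIdeal p :=
  Ideal.subset_span (.inl ⟨i, rfl⟩)

lemma self_sub_X_mul_pderiv_mem_eulerDefectIdeal (p : MvPolynomial σ R) (i : σ) :
    p - X i * pderiv i p ∈ eulerDefectIdeal p :=
  Ideal.subset_span (.inr ⟨(i, i), by simp only [if_true]⟩)

lemma X_mul_pderiv_mem_eulerDefectIdeal (p : MvPolynomial σ R) {i j : σ} (hij : i ≠ j) :
    X i * pderiv j p ∈ eulerDefectIdeal p := by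
  rw [← neg_mem_iff, ← zero_sub]
  exact Ideal.subset_span (.inr ⟨(i, j), by simp only [hij, if_false]⟩)

end EulerDefect

lemma map_eq_zero_of_mem_span {A M : Type*} [Semiring A] [AddZeroClass M] (φ : A →+ M)
    {s : Set A} (hs : ∀ a ∈ s, ∀ g, φ (g * a) = 0) {a : A} (ha : a ∈ Ideal.span s) : φ a = 0 := by
  induction ha using Submodule.closure_induction with
  | zero => exact map_zero φ
  | add _ _ _ _ hx hy => rw [map_add, hx, hy, add_zero]
  | smul_mem g a ha => exact hs a ha g

lemma not_le_single_of_lt_degree {σ : Type*} {d : ℕ} {e : σ →₀ ℕ} (he : d < e.degree) (i : σ) :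
    ¬ e ≤ single i d := fun h =>
  he.not_ge (degree_single i d ▸ degree_mono h)

section FermatAddMonomial

variable {σ R : Type*} [Fintype σ] [CommRing R]

variable (R) in
/-- The polynomial `∑ i, xᵢ ^ d + x ^ m`, a Fermat form perturbed by one monomial. -/
noncomputable def fermatAddMonomial (d : ℕ) (m : σ →₀ ℕ) : MvPolynomial σ R :=
  ∑ i, monomial (single i d) 1 + monomial m 1

lemma pderiv_fermatAddMonomial (d : ℕ) (m : σ →₀ ℕ) (j : σ) :
    pderiv j (fermatAddMonomial R d m) =
      monomial (single j (d - 1)) (d : R) + monomial (m - single j 1) (m j : R) := by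
  classical
  have pderiv_pow (i : σ) : pderiv j (monomial (single i d) (1 : R)) =
      if i = j then monomial (single j (d - 1)) (d : R) else 0 := by
    split_ifs with hij
    · rw [hij, pderiv_monomial, ← single_tsub, single_eq_same, one_mul]
    · rw [pderiv_monomial, single_eq_of_ne' hij, Nat.cast_zero, mul_zero, monomial_zero]
  simp only [fermatAddMonomial, map_add, map_sum, pderiv_pow, Finset.sum_ite_eq', Finset.mem_univ,
    if_true, pderiv_monomial, one_mul]

lemma X_mul_pderiv_fermatAddMonomial (d : ℕ) (m : σ →₀ ℕ) (i j : σ) :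
    X i * pderiv j (fermatAddMonomial R d m) =
      monomial (single i 1 + single j (d - 1)) (d : R) +
        monomial (single i 1 + (m - single j 1)) (m j : R) := by
  rw [pderiv_fermatAddMonomial, mul_add, X, monomial_mul, monomial_mul, one_mul, one_mul]

lemma X_mul_pderiv_self_fermatAddMonomial (d : ℕ) (m : σ →₀ ℕ) (i : σ) :
    X i * pderiv i (fermatAddMonomial R d m) =
      monomial (single i d) (d : R) + monomial m (m i : R) := by
  have restore_exponent (s : σ →₀ ℕ) :
      monomial (single i 1 + (s - single i 1)) (s i : R) = monomial s (s i : R) := by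
    by_cases hs : s i = 0
    · simp only [hs, Nat.cast_zero, monomial_zero]
    · rw [add_tsub_cancel_of_le (single_le_iff.2 (Nat.one_le_iff_ne_zero.2 hs))]
  have restore_pow := restore_exponent (single i d)
  rw [single_eq_same, ← single_tsub] at restore_pow
  rw [X_mul_pderiv_fermatAddMonomial, restore_pow, restore_exponent]

/-- The functional separating `fermatAddMonomial R d m` from the extension of its `eulerDefectIdeal`
to power series. With `αᵢ` the weight of `xᵢ ^ d`, `β` that of `x ^ m` and `c = d (|m| - d)`, the
weights solve `d αᵢ + mᵢ β = c` for all `i` and `∑ αᵢ + β = c`. -/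
noncomputable def separatingFunctional (d : ℕ) (m : σ →₀ ℕ) : MvPowerSeries σ R →ₗ[R] R :=
  ∑ i, (m.degree - d - m i * (Fintype.card σ - d) : R) • MvPowerSeries.coeff (single i d) +
    (d * (Fintype.card σ - d) : R) • MvPowerSeries.coeff m

lemma separatingFunctional_apply (d : ℕ) (m : σ →₀ ℕ) (p : MvPowerSeries σ R) :
    separatingFunctional d m p =
      ∑ i, (m.degree - d - m i * (Fintype.card σ - d)) * MvPowerSeries.coeff (single i d) p +
        d * (Fintype.card σ - d) * MvPowerSeries.coeff m p := by
  simp only [separatingFunctional, LinearMap.add_apply, LinearMap.sum_apply, LinearMap.smul_apply,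
    smul_eq_mul]

lemma separatingFunctional_mul_monomial_eq_zero {d : ℕ} {m e : σ →₀ ℕ}
    (hpow : ∀ i, ¬ e ≤ single i d) (hm : ¬ e ≤ m) (g : MvPowerSeries σ R) (r : R) :
    separatingFunctional d m (g * MvPowerSeries.monomial e r) = 0 := by
  simp only [separatingFunctional_apply, MvPowerSeries.coeff_mul_monomial, hpow, hm, if_false,
    mul_zero, Finset.sum_const_zero, add_zero]

lemma separatingFunctional_mul_pow {d : ℕ} {m : σ →₀ ℕ} {i : σ} (hi : m i < d)
    (g : MvPowerSeries σ R) (r : R) :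
    separatingFunctional d m (g * MvPowerSeries.monomial (single i d) r) =
      (m.degree - d - m i * (Fintype.card σ - d)) * (MvPowerSeries.constantCoeff g * r) := by
  classical
  have single_le_single_iff (j : σ) : single i d ≤ single j d ↔ j = i := by
    rw [single_le_iff, single_apply]
    split_ifs with hji
    · simp only [le_refl, hji]
    · simp only [hji, iff_false, not_le, (Nat.zero_le _).trans_lt hi]
  have not_le : ¬ single i d ≤ m := fun h => hi.not_ge (single_le_iff.1 h)
  simp only [separatingFunctional_apply, MvPowerSeries.coeff_mul_monomial, single_le_single_iff,
    not_le, if_false, mul_zero, add_zero, mul_ite, Finset.sum_ite_eq', Finset.mem_univ, if_true,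
    tsub_self, MvPowerSeries.coeff_zero_eq_constantCoeff]

lemma separatingFunctional_mul_monomial_self {d : ℕ} {m : σ →₀ ℕ} (hd : d < m.degree)
    (g : MvPowerSeries σ R) (r : R) :
    separatingFunctional d m (g * MvPowerSeries.monomial m r) =
      d * (Fintype.card σ - d) * (MvPowerSeries.constantCoeff g * r) := by
  simp only [separatingFunctional_apply, MvPowerSeries.coeff_mul_monomial,
    not_le_single_of_lt_degree hd, if_false, mul_zero, Finset.sum_const_zero, zero_add, le_refl,
    if_true, tsub_self, MvPowerSeries.coeff_zero_eq_constantCoeff]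

lemma separatingFunctional_mul_fermatAddMonomial {d : ℕ} {m : σ →₀ ℕ} (hm : ∀ i, m i < d)
    (hd : d < m.degree) (g : MvPowerSeries σ R) :
    separatingFunctional d m (g * (fermatAddMonomial R d m : MvPowerSeries σ R)) =
      d * (m.degree - d) * MvPowerSeries.constantCoeff g := by
  have coe_eq : (fermatAddMonomial R d m : MvPowerSeries σ R) =
      ∑ i, MvPowerSeries.monomial (single i d) 1 + MvPowerSeries.monomial m 1 := by
    simp only [← coeToMvPowerSeries.ringHom_apply, fermatAddMonomial, map_add, map_sum]
    simp only [coeToMvPowerSeries.ringHom_apply, coe_monomial]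
  have sum_exponents : ∑ i, (m i : R) = m.degree := by
    rw [degree_eq_sum, Nat.cast_sum]
  simp only [coe_eq, mul_add, Finset.mul_sum, map_add, map_sum, separatingFunctional_mul_pow (hm _),
    separatingFunctional_mul_monomial_self hd, mul_one]
  rw [← Finset.sum_mul, Finset.sum_sub_distrib, ← Finset.sum_mul, sum_exponents, Finset.sum_const,
    Finset.card_univ, nsmul_eq_mul]
  ring

lemma separatingFunctional_mul_X_mul_pderiv_self {d : ℕ} {m : σ →₀ ℕ} {i : σ} (hi : m i < d)
    (hd : d < m.degree) (g : MvPowerSeries σ R) :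
    separatingFunctional d m
        (g * ((X i * pderiv i (fermatAddMonomial R d m) : MvPolynomial σ R) : MvPowerSeries σ R)) =
      d * (m.degree - d) * MvPowerSeries.constantCoeff g := by
  rw [X_mul_pderiv_self_fermatAddMonomial, MvPolynomial.coe_add,
    coe_monomial, coe_monomial, mul_add, map_add, separatingFunctional_mul_pow hi,
    separatingFunctional_mul_monomial_self hd]
  ring

lemma separatingFunctional_mul_X_mul_pow_eq_zero {d : ℕ} {m : σ →₀ ℕ} {i j : σ} (hij : i ≠ j)
    (hj : m j + 1 < d) (g : MvPowerSeries σ R) (r : R) :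
    separatingFunctional d m
      (g * MvPowerSeries.monomial (single i 1 + single j (d - 1)) r) = 0 := by
  refine separatingFunctional_mul_monomial_eq_zero (fun k hk => ?_) (fun h => ?_) g r
  · obtain rfl | hki := eq_or_ne k i
    · have le_at_j := hk j
      rw [Finsupp.add_apply, single_eq_of_ne' hij, single_eq_same, single_eq_of_ne' hij] at le_at_j
      omega
    · have le_at_i := hk i
      rw [Finsupp.add_apply, single_eq_same, single_eq_of_ne' hki] at le_at_i
      omega
  · have le_at_j := h j
    rw [Finsupp.add_apply, single_eq_same] at le_at_j
    omega

lemma separatingFunctional_mul_shifted_monomial_eq_zero {d : ℕ} {m : σ →₀ ℕ} {i j : σ}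
    (hij : i ≠ j) (hj : m j ≠ 0) (hd : d < m.degree) (g : MvPowerSeries σ R) (r : R) :
    separatingFunctional d m
      (g * MvPowerSeries.monomial (single i 1 + (m - single j 1)) r) = 0 := by
  have degree_eq : (single i 1 + (m - single j 1)).degree = m.degree := by
    conv_rhs => rw [← add_tsub_cancel_of_le (single_le_iff.2 (Nat.one_le_iff_ne_zero.2 hj))]
    simp only [map_add, degree_single]
  refine separatingFunctional_mul_monomial_eq_zero
    (not_le_single_of_lt_degree (degree_eq ▸ hd)) (fun h => ?_) g r
  have le_at_i := h i
  rw [Finsupp.add_apply, tsub_apply, single_eq_same, single_eq_of_ne hij] at le_at_i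
  omega

lemma separatingFunctional_mul_X_mul_pderiv_of_ne {d : ℕ} {m : σ →₀ ℕ} {i j : σ} (hij : i ≠ j)
    (hj : m j + 1 < d) (hd : d < m.degree) (g : MvPowerSeries σ R) :
    separatingFunctional d m
        (g * ((X i * pderiv j (fermatAddMonomial R d m) : MvPolynomial σ R) : MvPowerSeries σ R)) =
      0 := by
  rw [X_mul_pderiv_fermatAddMonomial, MvPolynomial.coe_add, coe_monomial, coe_monomial, mul_add,
    map_add, separatingFunctional_mul_X_mul_pow_eq_zero hij hj, zero_add]
  by_cases hmj : m j = 0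
  · rw [hmj, Nat.cast_zero, map_zero, mul_zero, map_zero]
  · exact separatingFunctional_mul_shifted_monomial_eq_zero hij hmj hd g _

variable [DecidableEq σ]

lemma separatingFunctional_eq_zero_of_mem {d : ℕ} {m : σ →₀ ℕ} (hm : ∀ i, m i + 1 < d)
    (hd : d < m.degree) {p : MvPowerSeries σ R}
    (hp : p ∈ (eulerDefectIdeal (fermatAddMonomial R d m)).map coeToMvPowerSeries.ringHom) :
    separatingFunctional d m p = 0 := by
  have exponent_lt (i : σ) : m i < d := (Nat.lt_succ_self _).trans (hm i)
  rw [eulerDefectIdeal, Ideal.map_span] at hp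
  refine map_eq_zero_of_mem_span (separatingFunctional d m).toAddMonoidHom ?_ hp
  rintro _ ⟨_, ⟨i, rfl⟩ | ⟨⟨i, j⟩, rfl⟩, rfl⟩ g <;>
    simp only [LinearMap.toAddMonoidHom_coe]
  · rw [map_mul coeToMvPowerSeries.ringHom, ← mul_assoc, coeToMvPowerSeries.ringHom_apply,
      coeToMvPowerSeries.ringHom_apply,
      separatingFunctional_mul_fermatAddMonomial exponent_lt hd, coe_X, map_mul,
      MvPowerSeries.constantCoeff_X, mul_zero, mul_zero]
  · rw [map_sub, mul_sub, map_sub, coeToMvPowerSeries.ringHom_apply,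
      coeToMvPowerSeries.ringHom_apply]
    obtain rfl | hij := eq_or_ne i j
    · rw [if_pos rfl, separatingFunctional_mul_fermatAddMonomial exponent_lt hd,
        separatingFunctional_mul_X_mul_pderiv_self (exponent_lt i) hd, sub_self]
    · rw [if_neg hij, MvPolynomial.coe_zero, mul_zero, map_zero,
        separatingFunctional_mul_X_mul_pderiv_of_ne hij (hm j) hd, sub_self]

theorem stmt_7_general {d : ℕ} {m : σ →₀ ℕ} (hm : ∀ i, m i + 1 < d) (hd : d < m.degree)
    (hc : (d * (m.degree - d) : R) ≠ 0) :
    coeToMvPowerSeries.ringHom (fermatAddMonomial R d m) ∉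
      (eulerDefectIdeal (fermatAddMonomial R d m)).map coeToMvPowerSeries.ringHom := by
  intro h
  have value_eq_zero := separatingFunctional_eq_zero_of_mem hm hd h
  have value_eq := separatingFunctional_mul_fermatAddMonomial
    (fun i => (Nat.lt_succ_self _).trans (hm i)) hd (1 : MvPowerSeries σ R)
  rw [one_mul, map_one, mul_one] at value_eq
  exact hc (value_eq.symm.trans value_eq_zero)

end FermatAddMonomial

lemma f_eq_fermatAddMonomial :
    f = fermatAddMonomial ℂ 4 (single 0 1 + single 1 2 + single 2 2) := by
  simp only [f, fermatAddMonomial, Fin.sum_univ_three, X, monomial_pow, monomial_mul, smul_single,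
    one_pow, mul_one, smul_eq_mul]

lemma J₁_le_map_eulerDefectIdeal : J₁ ≤ (eulerDefectIdeal f).map ι := by
  have X_mul_mem (i : Fin 3) : ι (X i * f) ∈ (eulerDefectIdeal f).map ι :=
    Ideal.mem_map_of_mem ι (X_mul_self_mem_eulerDefectIdeal f i)
  have diagonal_mem (i : Fin 3) : ι (f - X i * pderiv i f) ∈ (eulerDefectIdeal f).map ι :=
    Ideal.mem_map_of_mem ι (self_sub_X_mul_pderiv_mem_eulerDefectIdeal f i)
  have offDiagonal_mem (i j : Fin 3) (hij : i ≠ j) :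
      ι (X i * pderiv j f) ∈ (eulerDefectIdeal f).map ι :=
    Ideal.mem_map_of_mem ι (X_mul_pderiv_mem_eulerDefectIdeal f hij)
  refine Ideal.span_le.2 ?_
  simp only [Set.insert_subset_iff, Set.singleton_subset_iff, SetLike.mem_coe]
  exact ⟨X_mul_mem 0, X_mul_mem 1, X_mul_mem 2,
    diagonal_mem 0, offDiagonal_mem 0 1 (by decide), offDiagonal_mem 0 2 (by decide),
    offDiagonal_mem 1 0 (by decide), diagonal_mem 1, offDiagonal_mem 1 2 (by decide),
    offDiagonal_mem 2 0 (by decide), offDiagonal_mem 2 1 (by decide), diagonal_mem 2⟩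

theorem stmt_7 : ι f ∉ J₁ := by
  intro h
  have h_mem := J₁_le_map_eulerDefectIdeal h
  rw [f_eq_fermatAddMonomial] at h_mem
  refine stmt_7_general ?_ ?_ ?_ h_mem
  · intro i
    fin_cases i <;> simp
  · simp
  · simp only [map_add, degree_single]
    norm_num
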